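/- Equivalence of the sewing relation and the Schottky relation: let w₊, w₋, ρ ∈ ℂ with w₊ ≠ w₋ and ρ ≠ 0, and let q ∈ ℂ with q ∉ {1, −1} satisfy q·(w₊ − w₋)² = −ρ·(1 + q)². Set W₊ = (w₊ + q·w₋)/(1 + q) and W₋ = (w₋ + q·w₊)/(1 + q). Then for all z, z′ ∈ ℂ: (z′ − w₋)(z − w₊) = ρ if and only if (z′ − W₋)(z − W₊) = q·(z′ − W₊)(z − W₋). -/

import Mathlib

/-!
The Schottky relation has leading part `(1 - q) z′z`. Dividing by `1 - q` and completing the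
product recovers the centres `w₋`, `w₊`, because `W₊ - q W₋ = (1 - q) w₊` and
`W₋ - q W₊ = (1 - q) w₋`. The remaining constant is `w₊w₋ - W₊W₋ = -q (w₊ - w₋)² / (1 + q)²`,
which the condition on `q` identifies with `ρ`.
-/

section Field

variable {K : Type*} [Field K] {q : K}

/-- The fixed point `(a + q b) / (1 + q)` of a Schottky generator with multiplier `q`, obtained from
the sewing centres `a` and `b`. In the paper's notation, `W₊ = schottkyFixedPoint q w₊ w₋` and
`W₋ = schottkyFixedPoint q w₋ w₊`. -/
def schottkyFixedPoint (q a b : K) : K := (a + q * b) / (1 + q)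

lemma schottkyFixedPoint_sub_mul_swap (hq : 1 + q ≠ 0) (a b : K) :
    schottkyFixedPoint q a b - q * schottkyFixedPoint q b a = (1 - q) * a := by
  unfold schottkyFixedPoint
  field_simp
  ring

lemma schottkyFixedPoint_mul_swap (hq : 1 + q ≠ 0) (a b : K) :
    schottkyFixedPoint q a b * schottkyFixedPoint q b a =
      a * b + q * (a - b) ^ 2 / (1 + q) ^ 2 := by
  unfold schottkyFixedPoint
  field_simp
  ring

lemma schottky_sub_eq_mul_sewing (hq : 1 + q ≠ 0) (wp wm z z' : K) :
    (z' - schottkyFixedPoint q wm wp) * (z - schottkyFixedPoint q wp wm) -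
        q * ((z' - schottkyFixedPoint q wp wm) * (z - schottkyFixedPoint q wm wp)) =
      (1 - q) * ((z' - wm) * (z - wp) + q * (wp - wm) ^ 2 / (1 + q) ^ 2) := by
  linear_combination
    -z' * schottkyFixedPoint_sub_mul_swap hq wp wm - z * schottkyFixedPoint_sub_mul_swap hq wm wp +
      (1 - q) * schottkyFixedPoint_mul_swap hq wp wm

theorem sewing_iff_schottky_general {wp wm ρ : K} (hq1 : q ≠ 1) (hq2 : q ≠ -1)
    (h : q * (wp - wm) ^ 2 = -ρ * (1 + q) ^ 2) (z z' : K) :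
    (z' - wm) * (z - wp) = ρ ↔
      (z' - schottkyFixedPoint q wm wp) * (z - schottkyFixedPoint q wp wm) =
        q * ((z' - schottkyFixedPoint q wp wm) * (z - schottkyFixedPoint q wm wp)) := by
  have one_add_ne : 1 + q ≠ 0 := fun h0 => hq2 (eq_neg_of_add_eq_zero_right h0)
  have one_sub_ne : 1 - q ≠ 0 := sub_ne_zero.mpr hq1.symm
  have sewing_const_eq : q * (wp - wm) ^ 2 / (1 + q) ^ 2 = -ρ :=
    (div_eq_iff (pow_ne_zero 2 one_add_ne)).mpr h
  calc
    (z' - wm) * (z - wp) = ρ ↔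
        (1 - q) * ((z' - wm) * (z - wp) + q * (wp - wm) ^ 2 / (1 + q) ^ 2) = 0 := by
      rw [mul_eq_zero_iff_left one_sub_ne, sewing_const_eq, ← sub_eq_add_neg, sub_eq_zero]
    _ ↔ (z' - schottkyFixedPoint q wm wp) * (z - schottkyFixedPoint q wp wm) =
        q * ((z' - schottkyFixedPoint q wp wm) * (z - schottkyFixedPoint q wm wp)) := by
      rw [← schottky_sub_eq_mul_sewing one_add_ne, sub_eq_zero]

end Field

/-- Equivalence of the sewing relation and the Schottky relation: if
`q (w₊ - w₋)² = -ρ (1 + q)²` with `w₊ ≠ w₋`, `ρ ≠ 0`, `q ∉ {1, -1}`, and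
`W₊ = (w₊ + q w₋)/(1 + q)`, `W₋ = (w₋ + q w₊)/(1 + q)`, then for all `z, z′ ∈ ℂ`
the sewing relation `(z′ - w₋)(z - w₊) = ρ` holds if and only if the Schottky relation
`(z′ - W₋)(z - W₊) = q (z′ - W₊)(z - W₋)` holds. -/
theorem sewing_iff_schottky (wp wm ρ q : ℂ) (hw : wp ≠ wm) (hρ : ρ ≠ 0)
    (hq1 : q ≠ 1) (hq2 : q ≠ -1)
    (h : q * (wp - wm) ^ 2 = -ρ * (1 + q) ^ 2) (z z' : ℂ) :
    (z' - wm) * (z - wp) = ρ ↔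
      (z' - (wm + q * wp) / (1 + q)) * (z - (wp + q * wm) / (1 + q)) =
        q * ((z' - (wp + q * wm) / (1 + q)) * (z - (wm + q * wp) / (1 + q))) :=
  sewing_iff_schottky_general hq1 hq2 h z z'
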